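/- arXiv:1802.05873 — 4 statements merged into one kernel-verified Lean document; each statement's English description precedes it below -/
import Mathlib

section
/- Triangle Packing Lemma (Short Child): Let s ≥ 1 and define δ_sh(s) := (1 − 1/(2·√(1+s²) − 1))². Then for every δ with 0 ≤ δ ≤ δ_sh(s), one has δ ≥ ((√(1 + δ·(1+s²)) − 1)/(√(1+s²) − 1))², i.e. δ ≥ B_sh(s,δ). -/
/-- Triangle Packing Lemma (Short Child): for `s ≥ 1` and
`0 ≤ δ ≤ δ_sh(s) := (1 − 1/(2√(1+s²) − 1))²`, one has `δ ≥ B_sh(s,δ)`. -/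
theorem triangle_packing_lemma_short_child (s δ : ℝ) (hs : 1 ≤ s)
    (hδ0 : 0 ≤ δ) (hδ1 : δ ≤ (1 - 1 / (2 * Real.sqrt (1 + s ^ 2) - 1)) ^ 2) :
    δ ≥ ((Real.sqrt (1 + δ * (1 + s ^ 2)) - 1) / (Real.sqrt (1 + s ^ 2) - 1)) ^ 2 := by
  have hr2 : Real.sqrt (1 + s ^ 2) ^ 2 = 1 + s ^ 2 := Real.sq_sqrt (by positivity)
  have hr : 1 < Real.sqrt (1 + s ^ 2) := Real.lt_sqrt_of_sq_lt (by nlinarith)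
  generalize Real.sqrt (1 + s ^ 2) = r at *
  rw [← hr2]
  obtain ⟨d, hd, rfl⟩ : ∃ d : ℝ, 0 ≤ d ∧ δ = d ^ 2 :=
    ⟨Real.sqrt δ, Real.sqrt_nonneg δ, (Real.sq_sqrt hδ0).symm⟩
  have hpos : 0 < 2 * r - 1 := by linarith
  have hfrac : 1 - 1 / (2 * r - 1) = 2 * (r - 1) / (2 * r - 1) := by
    field_simp
    ring
  have hd_le : d * (2 * r - 1) ≤ 2 * (r - 1) := by
    rw [hfrac] at hδ1
    exact (le_div_iff₀ hpos).1
      (abs_le_of_sq_le_sq' hδ1 (div_nonneg (by linarith) hpos.le)).2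
  have hsqrt_le : Real.sqrt (1 + d ^ 2 * r ^ 2) ≤ 1 + d * (r - 1) :=
    Real.sqrt_le_iff.2 ⟨by nlinarith, by nlinarith [mul_le_mul_of_nonneg_left hd_le hd]⟩
  have one_le_sqrt : 1 ≤ Real.sqrt (1 + d ^ 2 * r ^ 2) :=
    Real.one_le_sqrt.2 (by nlinarith [sq_nonneg (d * r)])
  refine pow_le_pow_left₀ (div_nonneg (by linarith) (by linarith)) ?_ 2
  rw [div_le_iff₀ (by linarith)]
  linarith
end

section
/- For every real s ≥ 1, 3·(1 − 1/(2·√(1+s²) − 1))² ≥ s²/(1+s²); that is, 3·δ_sh(s) ≥ a_lg*/a, where a_lg*/a = s²/(1+s²) is the ideal capacity fraction of the long side. -/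
/-- For all `s ≥ 1`, `3·δ_sh(s) ≥ a_lg*/a = s²/(1+s²)`. -/
theorem three_delta_sh_ge (s : ℝ) (hs : 1 ≤ s) :
    3 * (1 - 1 / (2 * Real.sqrt (1 + s ^ 2) - 1)) ^ 2 ≥ s ^ 2 / (1 + s ^ 2) := by
  have hsq : Real.sqrt (1 + s ^ 2) ^ 2 = 1 + s ^ 2 := Real.sq_sqrt (by positivity)
  have ht : 7 / 5 ≤ Real.sqrt (1 + s ^ 2) := Real.le_sqrt_of_sq_le (by nlinarith)
  have hratio : s ^ 2 / (1 + s ^ 2) =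
      (Real.sqrt (1 + s ^ 2) ^ 2 - 1) / Real.sqrt (1 + s ^ 2) ^ 2 := by
    rw [hsq, add_sub_cancel_left]
  rw [ge_iff_le, hratio]
  generalize Real.sqrt (1 + s ^ 2) = t at ht ⊢
  have hd : 0 < 2 * t - 1 := by linarith
  have hcubic : 0 ≤ 8 * t ^ 3 - 12 * t ^ 2 + 3 * t - 1 := by
    obtain ⟨u, rfl⟩ : ∃ u, t = u + 7 / 5 := ⟨t - 7 / 5, by ring⟩
    have hu : 0 ≤ u := by linarith
    ring_nf
    positivity
  have hsub : 1 - 1 / (2 * t - 1) = 2 * (t - 1) / (2 * t - 1) := by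
    field_simp
    ring
  rw [hsub, div_pow, ← mul_div_assoc, div_le_div_iff₀ (by positivity) (by positivity)]
  have hmul := mul_nonneg (show 0 ≤ t - 1 by linarith) hcubic
  linarith
end

section
/- Let s ≥ 1 and set δ_sh := (1 − 1/(2·√(1+s²) − 1))². If 2·δ_sh ≤ s²/(1+s²), then δ_sh > ((√(s² + (s²/(1+s²) − 2·δ_sh)·(1+s²)) − s)/(√(1+s²) − s))²; that is, δ_sh > B_lg(s, s²/(1+s²) − 2·δ_sh). -/
/-- The comparison of the radicand with the square of the target, in terms of
`w = √(1 + s²)` and `q = √δ_sh`. -/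
lemma radicand_lt_sq {s w q : ℝ} (hs : 1 ≤ s) (hw0 : 0 < w) (hw : w ^ 2 = 1 + s ^ 2)
    (hq : q = 1 - 1 / (2 * w - 1)) :
    2 * s ^ 2 - 2 * q ^ 2 * w ^ 2 < (s + q * (w - s)) ^ 2 := by
  have hw1 : 7 / 5 ≤ w := by nlinarith
  have hws : 2 * w ≤ 3 * s := by nlinarith
  have hsw : s < w := by nlinarith
  have hc : 2 / 5 ≤ s * (w - s) := by
    nlinarith [mul_nonneg (sub_nonneg.2 hws) (sub_nonneg.2 hsw.le)]
  have hd : 0 < 2 * w - 1 := by linarith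
  have hq' : q = (2 * w - 2) / (2 * w - 1) := by
    rw [hq]
    field_simp
    ring
  have hq0 : 0 ≤ q := by
    rw [hq']
    exact div_nonneg (by linarith) hd.le
  have hcubic : 0 < 4 * w ^ 3 - 8 * w ^ 2 + 31 / 5 * w - 13 / 5 := by
    nlinarith [mul_nonneg hw0.le (sq_nonneg (w - 1))]
  have hmain : 0 < 4 / 5 * q + 2 * q ^ 2 * w ^ 2 - (w ^ 2 - 1) := by
    have : 4 / 5 * q + 2 * q ^ 2 * w ^ 2 - (w ^ 2 - 1) =
        (w - 1) * (4 * w ^ 3 - 8 * w ^ 2 + 31 / 5 * w - 13 / 5) / (2 * w - 1) ^ 2 := by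
      rw [hq']
      field_simp
      ring
    rw [this]
    exact div_pos (mul_pos (by linarith) hcubic) (by positivity)
  nlinarith [mul_nonneg hq0 (sub_nonneg.2 hc), sq_nonneg (q * (w - s))]

/-- If `2·δ_sh ≤ s²/(1+s²)` then `δ_sh > B_lg(s, s²/(1+s²) − 2·δ_sh)`. -/
theorem case4_inequality (s : ℝ) (hs : 1 ≤ s)
    (δsh : ℝ) (hδsh : δsh = (1 - 1 / (2 * Real.sqrt (1 + s ^ 2) - 1)) ^ 2)
    (h : 2 * δsh ≤ s ^ 2 / (1 + s ^ 2)) :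
    δsh > ((Real.sqrt (s ^ 2 + (s ^ 2 / (1 + s ^ 2) - 2 * δsh) * (1 + s ^ 2)) - s) /
        (Real.sqrt (1 + s ^ 2) - s)) ^ 2 := by
  have hpos : 0 < 1 + s ^ 2 := by positivity
  have hw0 : 0 < Real.sqrt (1 + s ^ 2) := Real.sqrt_pos.2 hpos
  have hw : Real.sqrt (1 + s ^ 2) ^ 2 = 1 + s ^ 2 := Real.sq_sqrt hpos.le
  have hrad : s ^ 2 ≤ s ^ 2 + (s ^ 2 / (1 + s ^ 2) - 2 * δsh) * (1 + s ^ 2) :=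
    le_add_of_nonneg_right (mul_nonneg (sub_nonneg.2 h) hpos.le)
  have hrad_eq : s ^ 2 + (s ^ 2 / (1 + s ^ 2) - 2 * δsh) * (1 + s ^ 2) =
      2 * s ^ 2 - 2 * δsh * (1 + s ^ 2) := by
    field_simp
    ring
  generalize Real.sqrt (1 + s ^ 2) = w at *
  have hsw : s < w := by nlinarith
  have hw1 : 1 < w := by linarith
  have hlt := radicand_lt_sq hs hw0 hw rfl
  rw [← hδsh, hw, ← hrad_eq] at hlt
  have hq0 : 0 ≤ 1 - 1 / (2 * w - 1) := by
    rw [sub_nonneg, div_le_one (by linarith)]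
    linarith
  have hsqrt := (Real.sqrt_lt' (add_pos_of_pos_of_nonneg (by linarith)
    (mul_nonneg hq0 (sub_nonneg.2 hsw.le)))).2 hlt
  have hle := Real.le_sqrt_of_sq_le hrad
  rw [gt_iff_lt]
  conv_rhs => rw [hδsh]
  refine pow_lt_pow_left₀ ?_ (div_nonneg (sub_nonneg.2 hle) (sub_nonneg.2 hsw.le)) two_ne_zero
  rw [div_lt_iff₀ (sub_pos.2 hsw)]
  linarith
end

section
/- Let s ≥ 1. For every real δ ≥ 0, one has ((√(1 + δ·(1+s²)) − 1)/(√(1+s²) − 1))² ≤ δ if and only if δ ≤ (1 − 1/(2·√(1+s²) − 1))². In other words, B_sh(s,δ) ≤ δ holds exactly for δ ∈ [0, δ_sh(s)]. -/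
/-- The comparison behind `Bsh_le_iff`, in terms of `r = √(1 + s²)` and `d = √δ`. -/
lemma sq_div_le_sq_iff_le {r d : ℝ} (hr : 1 < r) (hd : 0 ≤ d) :
    ((Real.sqrt (1 + d ^ 2 * r ^ 2) - 1) / (r - 1)) ^ 2 ≤ d ^ 2 ↔
      d ^ 2 ≤ (1 - 1 / (2 * r - 1)) ^ 2 := by
  have hr' : 0 < r - 1 := by linarith
  have h2r : 0 < 2 * r - 1 := by linarith
  have hsqrt : 1 ≤ Real.sqrt (1 + d ^ 2 * r ^ 2) :=
    Real.one_le_sqrt.mpr (by nlinarith [mul_nonneg (sq_nonneg d) (sq_nonneg r)])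
  have hrhs : 1 - 1 / (2 * r - 1) = 2 * (r - 1) / (2 * r - 1) := by
    field_simp
    ring
  rw [hrhs, sq_le_sq₀ (div_nonneg (by linarith) hr'.le) hd, sq_le_sq₀ hd (by positivity),
    div_le_iff₀ hr', le_div_iff₀ h2r, sub_le_iff_le_add, Real.sqrt_le_left (by positivity)]
  constructor
  · intro h
    rcases hd.eq_or_lt with rfl | hd
    · linarith
    · exact le_of_mul_le_mul_left (by linarith) hd
  · intro h
    linarith [mul_le_mul_of_nonneg_left h hd]

/-- For `s ≥ 1` and `δ ≥ 0`, `B_sh(s,δ) ≤ δ` holds if and only if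
`δ ≤ δ_sh(s) := (1 − 1/(2√(1+s²) − 1))²`. -/
theorem Bsh_le_iff (s : ℝ) (hs : 1 ≤ s) (δ : ℝ) (hδ : 0 ≤ δ) :
    ((Real.sqrt (1 + δ * (1 + s ^ 2)) - 1) / (Real.sqrt (1 + s ^ 2) - 1)) ^ 2 ≤ δ ↔
      δ ≤ (1 - 1 / (2 * Real.sqrt (1 + s ^ 2) - 1)) ^ 2 := by
  have hr : 1 < Real.sqrt (1 + s ^ 2) := Real.lt_sqrt_of_sq_lt (by nlinarith)
  have key := sq_div_le_sq_iff_le hr (Real.sqrt_nonneg δ)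
  rwa [Real.sq_sqrt hδ, Real.sq_sqrt (by positivity)] at key
end
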